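/- For every integer j ≥ 57 and every positive integer m, the number m + j is the sum of exactly j positive fifth powers if and only if m + 57 is the sum of exactly 57 positive fifth powers. -/

import Mathlib

/-- A positive integer `n` is `(j,k)`-representable if it is a sum of exactly `j`
positive `k`-th powers. -/
def IsRepr (n j k : ℕ) : Prop :=
  ∃ a : Fin j → ℕ, (∀ i, 0 < a i) ∧ ∑ i, (a i) ^ k = n

/-!
Since `1` is a fifth power, the set of `m` such that `m + j` is a sum of `j` positive fifth powers
grows with `j`, and once two consecutive sets agree it is constant. For `m < 150000` the sets for
`j = 57` and `j = 58` are compared by computation. Every `m ≥ 150000` belongs to the set for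
`j = 57`. Below a huge bound this is seen by starting from the interval `[150000, 300000)`, which is
covered for `j = 20`, and lengthening it by one more fifth power at a time. Beyond that bound,
subtract one fifth power from `n` to reach a narrow window, then subtract `20` fifth powers to
prescribe the residue modulo `2460 * l ^ 4`. What remains has the form
`60075 * l ^ 5 - 2460 * l ^ 4 * x`, and Liouville's identity makes it a sum of `31` fifth powers.
-/

section

variable {j j' k m n : ℕ}

theorem isRepr_zero_iff : IsRepr n 0 k ↔ n = 0 := by
  simp [IsRepr, eq_comm]

theorem isRepr_succ_iff :
    IsRepr n (j + 1) k ↔ ∃ x n', 0 < x ∧ IsRepr n' j k ∧ x ^ k + n' = n := by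
  constructor
  · rintro ⟨a, ha, rfl⟩
    exact ⟨a 0, _, ha 0, ⟨fun i => a i.succ, fun i => ha _, rfl⟩,
      (Fin.sum_univ_succ fun i => a i ^ k).symm⟩
  · rintro ⟨x, _, hx, ⟨a, ha, rfl⟩, rfl⟩
    exact ⟨Fin.cons x a, Fin.cases hx ha, by simp [Fin.sum_univ_succ]⟩

theorem isRepr_pow {x : ℕ} (hx : 0 < x) : IsRepr (x ^ k) 1 k :=
  ⟨fun _ => x, fun _ => hx, by simp⟩

theorem isRepr_self (j k : ℕ) : IsRepr j j k :=
  ⟨fun _ => 1, fun _ => one_pos, by simp⟩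

theorem IsRepr.add (hm : IsRepr m j k) (hn : IsRepr n j' k) : IsRepr (m + n) (j + j') k := by
  obtain ⟨a, ha, rfl⟩ := hm
  obtain ⟨b, hb, rfl⟩ := hn
  exact ⟨Fin.append a b, Fin.addCases (by simpa using ha) (by simpa using hb),
    by simp [Fin.sum_univ_add]⟩

theorem IsRepr.pow_mul {c : ℕ} (hn : IsRepr n j k) (hc : 0 < c) : IsRepr (c ^ k * n) j k := by
  obtain ⟨a, ha, rfl⟩ := hn
  exact ⟨fun i => c * a i, fun i => Nat.mul_pos hc (ha i), by simp only [mul_pow, Finset.mul_sum]⟩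

theorem IsRepr.le (hn : IsRepr n j k) : j ≤ n := by
  obtain ⟨a, ha, rfl⟩ := hn
  simpa using Finset.sum_le_sum fun i (_ : i ∈ Finset.univ) => Nat.one_le_pow k _ (ha i)

theorem IsRepr.add_ones (h : IsRepr (m + j) j k) (hj : j ≤ j') : IsRepr (m + j') j' k := by
  obtain ⟨d, rfl⟩ := Nat.exists_eq_add_of_le hj
  simpa only [add_assoc] using h.add (isRepr_self d k)

theorem isRepr_add_iff_of_succ_imp {g : ℕ}
    (h : ∀ m, IsRepr (m + (g + 1)) (g + 1) k → IsRepr (m + g) g k) (hj : g ≤ j) :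
    IsRepr (m + j) j k ↔ IsRepr (m + g) g k := by
  refine ⟨fun hm => ?_, fun hm => hm.add_ones hj⟩
  induction j, hj using Nat.le_induction generalizing m with
  | base => exact hm
  | succ j _ ih =>
    obtain ⟨x, n, hx, hn, hxn⟩ := isRepr_succ_iff.1 hm
    obtain ⟨m', rfl⟩ := Nat.exists_eq_add_of_le' hn.le
    exact h m (isRepr_succ_iff.2 ⟨x, m' + g, hx, ih hn, by omega⟩)

/-! ### Bit sets of representable numbers -/

/-- The union of the sets `f 0, …, f (b - 1)`, where a natural number encodes the finite set of
positions of its binary digits `1`. -/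
def bitUnion (f : ℕ → ℕ) : ℕ → ℕ
  | 0 => 0
  | b + 1 => bitUnion f b ||| f b

theorem testBit_bitUnion {f : ℕ → ℕ} {b i : ℕ} :
    (bitUnion f b).testBit i = true ↔ ∃ y < b, (f y).testBit i = true := by
  induction b with
  | zero => simp [bitUnion]
  | succ b ih => rw [bitUnion, Nat.testBit_or, Bool.or_eq_true, ih, Nat.exists_lt_succ_right]

/-- The bit set of those `m < N` for which `m + j` is a sum of `j` positive `k`-th powers of numbers
not exceeding `b`. Because of the shift by `j`, adding `x ^ k` moves this set by `x ^ k - 1`. -/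
def reprBits (k b N : ℕ) : ℕ → ℕ
  | 0 => 1 % 2 ^ N
  | j + 1 => bitUnion (fun y => reprBits k b N j <<< ((y + 1) ^ k - 1)) b % 2 ^ N

theorem testBit_reprBits {b N : ℕ} (hb : N < (b + 1) ^ k) :
    (reprBits k b N j).testBit m = true ↔ m < N ∧ IsRepr (m + j) j k := by
  induction j generalizing m with
  | zero =>
    simp [reprBits, Nat.testBit_mod_two_pow, Nat.testBit_one_eq_true_iff_self_eq_zero,
      isRepr_zero_iff]
  | succ j ih =>
    have hpos (y : ℕ) : 0 < (y + 1) ^ k := by positivity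
    simp only [reprBits, Nat.testBit_mod_two_pow, Bool.and_eq_true, decide_eq_true_iff,
      testBit_bitUnion, Nat.testBit_shiftLeft, ih, isRepr_succ_iff (j := j)]
    refine and_congr_right fun hm => ⟨?_, ?_⟩
    · rintro ⟨y, -, hy, -, h⟩
      exact ⟨y + 1, _, y.succ_pos, h, by have := hpos y; omega⟩
    · rintro ⟨x, n, hx, hn, hxn⟩
      obtain ⟨y, rfl⟩ := Nat.exists_eq_add_of_le' (Nat.one_le_of_lt hx)
      obtain ⟨m', rfl⟩ := Nat.exists_eq_add_of_le' hn.le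
      have hyb : y < b := by
        by_contra! h
        have : (b + 1) ^ k ≤ (y + 1) ^ k := by gcongr
        omega
      have := hpos y
      have hm' : m - ((y + 1) ^ k - 1) = m' := by omega
      exact ⟨y, hyb, by omega, by omega, by rwa [hm']⟩

theorem reprBits_58_eq : reprBits 5 12 300000 58 = reprBits 5 12 300000 57 := by
  decide +kernel

theorem reprBits_20_shiftRight : reprBits 5 12 300000 20 >>> 150000 = 2 ^ 150000 - 1 := by
  decide +kernel

theorem isRepr_add_57_of_lt (hm : m < 300000) (h : IsRepr (m + 58) 58 5) :
    IsRepr (m + 57) 57 5 := by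
  have hbit := (testBit_reprBits (b := 12) (by norm_num)).2 ⟨hm, h⟩
  rw [reprBits_58_eq] at hbit
  exact ((testBit_reprBits (by norm_num)).1 hbit).2

/-! ### Covering long intervals -/

theorem add_one_pow_add_pow_le {x y : ℕ} (h : x ≤ y) (k : ℕ) :
    (x + 1) ^ k + y ^ k ≤ (y + 1) ^ k + x ^ k := by
  induction k with
  | zero => rfl
  | succ k ih =>
    obtain ⟨d, rfl⟩ := Nat.exists_eq_add_of_le h
    have hx : x ^ k ≤ (x + 1) ^ k := by gcongr; omega
    have hxy : (x + 1) ^ k ≤ (x + d + 1) ^ k := by gcongr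
    simp only [pow_succ]
    nlinarith

-- Each of the `k + 1` lower terms of the binomial expansion of `(x + 1) ^ (k + 1)` is a multiple of
-- a power of `x` not exceeding `x ^ k`; the coefficients add up to `2 ^ (k + 1) - 1`.
theorem add_one_pow_succ_add_pow_le {x : ℕ} (hx : 0 < x) (k : ℕ) :
    (x + 1) ^ (k + 1) + x ^ k ≤ x ^ (k + 1) + 2 ^ (k + 1) * x ^ k := by
  induction k with
  | zero => simp
  | succ k ih =>
    have hpow : x ^ k ≤ x ^ (k + 1) := Nat.pow_le_pow_right hx k.le_succ
    have htwo : 1 ≤ 2 ^ (k + 1) := Nat.one_le_two_pow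
    simp only [pow_succ _ (k + 1), pow_succ x k] at *
    nlinarith

theorem exists_add_pow_le_lt_add_add_one_pow {a : ℕ} (hk : k ≠ 0) (ha : a < n) :
    ∃ y, 0 < y ∧ a + y ^ k ≤ n ∧ n < a + (y + 1) ^ k := by
  have hle : Nat.nthRoot k (n - a) ^ k ≤ n - a := (Nat.le_nthRoot_iff hk).1 le_rfl
  have hlt : n - a < (Nat.nthRoot k (n - a) + 1) ^ k := Nat.lt_pow_nthRoot_add_one hk _
  have hone : 1 ^ k ≤ n - a := by rw [one_pow]; omega
  exact ⟨_, (Nat.le_nthRoot_iff hk).2 hone, by omega, by omega⟩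

/-- Every `m` in the interval `[A, A + L)` is such that `m + j` is a sum of `j` positive `k`-th
powers. -/
def CoversInterval (j k A L : ℕ) : Prop :=
  ∀ m, A ≤ m → m < A + L → IsRepr (m + j) j k

theorem CoversInterval.mono {A L L' : ℕ} (h : CoversInterval j k A L) (hL : L' ≤ L) :
    CoversInterval j k A L' :=
  fun m hA hm => h m hA (by omega)

-- The translates of the interval by `y ^ k - 1`, `1 ≤ y ≤ x`, leave no gaps, since the last
-- difference `(x + 1) ^ k - x ^ k` is the largest.
theorem CoversInterval.step {A L : ℕ} (h : CoversInterval j k A L) (hk : k ≠ 0) {x : ℕ}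
    (hx : 0 < x) (hL : (x + 1) ^ k ≤ L + x ^ k) :
    CoversInterval (j + 1) k A (L + x ^ k - 1) := by
  intro m hA hm
  obtain ⟨y, hy, hle, hlt⟩ : ∃ y, 0 < y ∧ A + y ^ k ≤ m + 1 ∧ m + 1 < A + y ^ k + L := by
    obtain ⟨y, hy, hle, hlt⟩ :=
      exists_add_pow_le_lt_add_add_one_pow hk (show A < m + 1 by omega)
    rcases le_total x y with hxy | hyx
    · have := Nat.pow_le_pow_left hxy k
      exact ⟨x, hx, by omega, by omega⟩
    · have := add_one_pow_add_pow_le hyx k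
      exact ⟨y, hy, by omega, by omega⟩
  obtain ⟨m', hm'⟩ := Nat.exists_eq_add_of_le hle
  exact isRepr_succ_iff.2 ⟨y, _, hy, h (A + m') (by omega) (by omega), by omega⟩

theorem CoversInterval.step_two_pow {A a : ℕ}
    (h : CoversInterval j (k + 1) A (2 ^ (k * a + k + 1))) :
    CoversInterval (j + 1) (k + 1) A (2 ^ ((k + 1) * a)) := by
  have hlen : 2 ^ (k * a + k + 1) = 2 ^ (k + 1) * (2 ^ a) ^ k := by ring
  have hgap := add_one_pow_succ_add_pow_le (show 0 < 2 ^ a by positivity) k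
  have hpos : 0 < 2 ^ (k * a + k + 1) := by positivity
  refine (h.step k.succ_ne_zero (x := 2 ^ a) (by positivity) (by omega)).mono ?_
  rw [pow_mul']
  omega

theorem CoversInterval.iterate_two_pow {A a : ℕ} (h : CoversInterval j 5 A (2 ^ (4 * a + 5)))
    (ha : 5 ≤ a) (t : ℕ) :
    CoversInterval (j + t) 5 A (2 ^ (4 * (fun a => (5 * a - 5) / 4)^[t] a + 5)) := by
  induction t generalizing j a with
  | zero => exact h
  | succ t ih =>
    have hstep : CoversInterval (j + 1) 5 A (2 ^ (4 * ((5 * a - 5) / 4) + 5)) :=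
      h.step_two_pow.mono (Nat.pow_le_pow_right two_pos (by omega))
    simpa only [Function.iterate_succ_apply, Nat.succ_add_eq_add_succ] using ih hstep (by omega)

theorem coversInterval_20 : CoversInterval 20 5 150000 150000 := by
  intro m hA hm
  have hbit : (reprBits 5 12 300000 20 >>> 150000).testBit (m - 150000) = true := by
    rw [reprBits_20_shiftRight, Nat.testBit_two_pow_sub_one, decide_eq_true_iff]
    omega
  rw [Nat.testBit_shiftRight, Nat.add_sub_cancel' hA] at hbit
  exact ((testBit_reprBits (by norm_num)).1 hbit).2

-- Each `x` is the largest one that the length reached so far permits.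
theorem coversInterval_28 : CoversInterval 28 5 150000 (2 ^ 45) := by
  have h₀ := coversInterval_20
  have h₁ := h₀.step (by simp) (x := 12) (by norm_num) (by norm_num)
  have h₂ := h₁.step (by simp) (x := 16) (by norm_num) (by norm_num)
  have h₃ := h₂.step (by simp) (x := 22) (by norm_num) (by norm_num)
  have h₄ := h₃.step (by simp) (x := 33) (by norm_num) (by norm_num)
  have h₅ := h₄.step (by simp) (x := 54) (by norm_num) (by norm_num)
  have h₆ := h₅.step (by simp) (x := 99) (by norm_num) (by norm_num)
  have h₇ := h₆.step (by simp) (x := 211) (by norm_num) (by norm_num)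
  have h₈ := h₇.step (by simp) (x := 540) (by norm_num) (by norm_num)
  exact h₈.mono (by norm_num)

theorem coversInterval_54 {e : ℕ} (he : e ≤ 4477) : CoversInterval 54 5 150000 (2 ^ e) := by
  have h54 := coversInterval_28.iterate_two_pow (a := 10) (by norm_num) 26
  have hlen : 1118 ≤ (fun a => (5 * a - 5) / 4)^[26] 10 := by decide
  generalize (fun a => (5 * a - 5) / 4)^[26] 10 = c at h54 hlen
  exact h54.mono (Nat.pow_le_pow_right two_pos (by omega))

/-! ### Covering residue classes -/

/-- Every element of `R` is a sum of `j` `k`-th powers. -/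
def IsWaringOrder (R : Type*) [Semiring R] (j k : ℕ) : Prop :=
  ∀ a : R, ∃ x : Fin j → R, ∑ i, x i ^ k = a

theorem IsWaringOrder.prod {R S : Type*} [Semiring R] [Semiring S] (hR : IsWaringOrder R j k)
    (hS : IsWaringOrder S j k) : IsWaringOrder (R × S) j k := by
  rintro ⟨a, b⟩
  obtain ⟨x, rfl⟩ := hR a
  obtain ⟨y, rfl⟩ := hS b
  exact ⟨fun i => (x i, y i), by ext <;> simp [Prod.fst_sum, Prod.snd_sum]⟩

theorem IsWaringOrder.of_ringEquiv {R S : Type*} [Semiring R] [Semiring S]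
    (h : IsWaringOrder R j k) (e : R ≃+* S) : IsWaringOrder S j k := by
  intro a
  obtain ⟨x, hx⟩ := h (e.symm a)
  exact ⟨fun i => e (x i), by rw [← e.apply_symm_apply a, ← hx]; simp⟩

theorem exists_pow_eq_of_isUnit {M : Type*} [Monoid M] (h : (Nat.card Mˣ).Coprime k) {a : M}
    (ha : IsUnit a) : ∃ x : M, x ^ k = a := by
  obtain ⟨u, rfl⟩ := ha
  obtain ⟨v, rfl⟩ := (powCoprime h).surjective u
  exact ⟨v, rfl⟩

theorem isUnit_or_isUnit_sub_one_zmod_prime_pow {p : ℕ} (hp : p.Prime) (e : ℕ)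
    (a : ZMod (p ^ e)) : IsUnit a ∨ IsUnit (a - 1) := by
  obtain ⟨n, rfl⟩ := ZMod.intCast_surjective a
  have hp' := Nat.prime_iff_prime_int.1 hp
  have isUnit_of_not_dvd (n : ℤ) (hn : ¬(p : ℤ) ∣ n) : IsUnit (n : ZMod (p ^ e)) := by
    rw [ZMod.coe_int_isUnit_iff_isCoprime, Nat.cast_pow]
    exact (hp'.coprime_iff_not_dvd.2 hn).pow_left
  by_cases hn : (p : ℤ) ∣ n
  · have hn' : ¬(p : ℤ) ∣ n - 1 := fun h => hp'.not_dvd_one (by simpa using dvd_sub hn h)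
    exact .inr (by exact_mod_cast isUnit_of_not_dvd _ hn')
  · exact .inl (isUnit_of_not_dvd n hn)

theorem isWaringOrder_two_zmod_two_pow (hk : Odd k) (e : ℕ) :
    IsWaringOrder (ZMod (2 ^ e)) 2 k := by
  intro a
  have hcard : (Nat.card (ZMod (2 ^ e))ˣ).Coprime k := by
    rw [Nat.card_eq_fintype_card, ZMod.card_units_eq_totient]
    rcases e with - | e
    · simp
    · rw [Nat.totient_prime_pow_succ Nat.prime_two]
      simpa using (Nat.coprime_two_left.2 hk).pow_left e
  rcases isUnit_or_isUnit_sub_one_zmod_prime_pow Nat.prime_two e a with ha | ha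
  · obtain ⟨x, rfl⟩ := exists_pow_eq_of_isUnit hcard ha
    exact ⟨![x, 0], by simp [hk.pos.ne']⟩
  · obtain ⟨x, hx⟩ := exists_pow_eq_of_isUnit hcard ha
    exact ⟨![x, 1], by simp [hx]⟩

theorem isWaringOrder_four_zmod_15 : IsWaringOrder (ZMod 15) 4 5 := fun a =>
  have pow_five_eq : ∀ a : ZMod 15, a ^ 5 = a := by decide
  ⟨![a, 0, 0, 0], by simp [Fin.sum_univ_four, pow_five_eq]⟩

-- Modulo `41` the fifth power of `d * (-3) ^ i` is `d * 3 ^ i` for `d ∈ {-1, 0, 1}`, so balanced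
-- ternary expansions with four digits are sums of four fifth powers.
theorem isWaringOrder_four_zmod_41 : IsWaringOrder (ZMod 41) 4 5 := fun a =>
  have ⟨_, hd⟩ : ∃ d : Fin 4 → SignType, ∑ i, (d i * (-3) ^ (i : ℕ) : ZMod 41) ^ 5 = a := by
    decide +revert +kernel
  ⟨_, hd⟩

theorem isWaringOrder_four_zmod_615 : IsWaringOrder (ZMod 615) 4 5 :=
  (isWaringOrder_four_zmod_15.prod isWaringOrder_four_zmod_41).of_ringEquiv
    (ZMod.chineseRemainder (m := 15) (n := 41) (by norm_num)).symm

/-- Every residue class modulo `M` contains a sum of `j` positive `k`-th powers not exceeding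
`C`. -/
def CoversResidues (j k M C : ℕ) : Prop :=
  ∀ q : ℤ, ∃ r : ℕ, IsRepr r j k ∧ r ≤ C ∧ (M : ℤ) ∣ q - r

theorem CoversResidues.mono {M M' C C' : ℕ} (h : CoversResidues j k M C) (hM : M' ∣ M)
    (hC : C ≤ C') : CoversResidues j k M' C' := fun q =>
  have ⟨r, hr, hrC, hrM⟩ := h q
  ⟨r, hr, hrC.trans hC, (Int.natCast_dvd_natCast.2 hM).trans hrM⟩

theorem exists_pos_le_natCast_eq {M : ℕ} [NeZero M] (a : ZMod M) :
    ∃ y : ℕ, 0 < y ∧ y ≤ M ∧ (y : ZMod M) = a :=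
  ⟨M - (-a).val, Nat.sub_pos_of_lt (ZMod.val_lt _), Nat.sub_le _ _, by
    simp [Nat.cast_sub (ZMod.val_lt (-a)).le]⟩

theorem IsWaringOrder.coversResidues {M : ℕ} [NeZero M] (h : IsWaringOrder (ZMod M) j k) :
    CoversResidues j k M (j * M ^ k) := by
  intro q
  obtain ⟨x, hx⟩ := h q
  choose y hpos hle hcast using fun i => exists_pos_le_natCast_eq (x i)
  refine ⟨∑ i, y i ^ k, ⟨y, hpos, rfl⟩, ?_, ?_⟩
  · simpa using Finset.sum_le_sum fun i (_ : i ∈ Finset.univ) => Nat.pow_le_pow_left (hle i) k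
  · rw [← ZMod.intCast_eq_intCast_iff_dvd_sub]
    push_cast
    simp only [hcast, hx]

theorem CoversResidues.mul {M M' C C' c : ℕ} (h : CoversResidues j k M C) (hc : 0 < c)
    (hcM : c ^ k ∣ M) (h' : CoversResidues j' k M' C') :
    CoversResidues (j + j') k (c ^ k * M') (C + c ^ k * C') := by
  intro q
  obtain ⟨r, hr, hrC, t, ht⟩ := h.mono hcM le_rfl q
  obtain ⟨r', hr', hrC', hrM'⟩ := h' t
  refine ⟨r + c ^ k * r', hr.add (hr'.pow_mul hc), by gcongr, ?_⟩
  push_cast at ht ⊢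
  rw [← sub_sub, ht, ← mul_sub]
  exact mul_dvd_mul_left _ hrM'

theorem CoversResidues.step_two_pow {e s u v : ℕ} (hk : Odd k)
    (h : CoversResidues j k (2 ^ e) (j * (2 ^ s) ^ k)) (hu : k * u ≤ e) (hs : u + v = s) :
    CoversResidues (j + 2) k (2 ^ (k * u + v)) ((j + 2) * (2 ^ s) ^ k) := by
  subst hs
  have hdvd : (2 ^ u) ^ k ∣ 2 ^ e := by
    rw [← pow_mul']
    exact pow_dvd_pow 2 hu
  have h' := (isWaringOrder_two_zmod_two_pow hk v).coversResidues
  convert h.mul (by positivity) hdvd h' using 1 <;> ring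

-- With bases up to `2 ^ s`, each step turns the exponent `e` of the modulus into `s + 4 * u`, where
-- `u` may be as large as `e / 5`.
theorem coversResidues_two_pow (w : ℕ) :
    CoversResidues 16 5 (2 ^ (408 * w)) (16 * (2 ^ (100 * w)) ^ 5) := by
  have hk : Odd 5 := by decide
  have h₁ := (isWaringOrder_two_zmod_two_pow hk (100 * w)).coversResidues
  have h₂ := h₁.step_two_pow hk (u := 20 * w) (v := 80 * w) (by omega) (by omega)
  have h₃ := h₂.step_two_pow hk (u := 36 * w) (v := 64 * w) (by omega) (by omega)
  have h₄ := h₃.step_two_pow hk (u := 48 * w) (v := 52 * w) (by omega) (by omega)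
  have h₅ := h₄.step_two_pow hk (u := 58 * w) (v := 42 * w) (by omega) (by omega)
  have h₆ := h₅.step_two_pow hk (u := 66 * w) (v := 34 * w) (by omega) (by omega)
  have h₇ := h₆.step_two_pow hk (u := 72 * w) (v := 28 * w) (by omega) (by omega)
  have h₈ := h₇.step_two_pow hk (u := 77 * w) (v := 23 * w) (by omega) (by omega)
  convert h₈ using 2
  ring

theorem coversResidues_2460_mul_two_pow {w : ℕ} (hw : 1 ≤ w) :
    CoversResidues 20 5 (2460 * (2 ^ (100 * w)) ^ 4) (17 * (2 ^ (100 * w)) ^ 5) := by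
  have hdvd : (2 ^ (80 * w + 1)) ^ 5 ∣ 2 ^ (408 * w) := by
    rw [← pow_mul]
    exact pow_dvd_pow 2 (by omega)
  have hbound : (2 ^ (80 * w + 1)) ^ 5 * (4 * 615 ^ 5) ≤ (2 ^ (100 * w)) ^ 5 :=
    calc (2 ^ (80 * w + 1)) ^ 5 * (4 * 615 ^ 5) ≤ (2 ^ (80 * w + 1)) ^ 5 * 2 ^ 49 := by
          gcongr; norm_num
      _ = 2 ^ ((80 * w + 1) * 5 + 49) := by rw [← pow_mul, ← pow_add]
      _ ≤ 2 ^ (100 * w * 5) := Nat.pow_le_pow_right two_pos (by omega)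
      _ = (2 ^ (100 * w)) ^ 5 := pow_mul ..
  exact ((coversResidues_two_pow w).mul (by positivity) hdvd
    isWaringOrder_four_zmod_615.coversResidues).mono ⟨8, by ring⟩ (by omega)

/-! ### Large numbers -/

-- The bases are `x ± (a + b)` and `x ± (a - b)`.
theorem isRepr_four_of_add_lt {x a b : ℕ} (h : a + b < x) :
    IsRepr (4 * x ^ 5 + 40 * x ^ 3 * (a ^ 2 + b ^ 2)
      + 20 * x * (a ^ 4 + 6 * a ^ 2 * b ^ 2 + b ^ 4)) 4 5 := by
  obtain ⟨e, rfl⟩ := Nat.exists_eq_add_of_lt h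
  refine ⟨![2 * a + 2 * b + e + 1, e + 1, 2 * a + e + 1, 2 * b + e + 1], ?_, ?_⟩
  · simp [Fin.forall_fin_succ]
  · simp only [Fin.sum_univ_four, Matrix.cons_val]
    ring

-- Liouville's identity `∑ ((a + b) ^ 4 + (a - b) ^ 4) = 6 * (a ^ 2 + b ^ 2 + c ^ 2 + d ^ 2) ^ 2`,
-- the sum ranging over the pairs from `a, b, c, d`, enters through the coefficient of `x`.
theorem isRepr_liouville (x n : ℕ) (h : 2 * n < x ^ 2) :
    IsRepr (24 * x ^ 5 + 120 * x ^ 3 * n + 60 * x * n ^ 2) 24 5 := by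
  obtain ⟨a, b, c, d, rfl⟩ := Nat.sum_four_squares n
  have add_lt (s t : ℕ) (hst : s ^ 2 + t ^ 2 ≤ a ^ 2 + b ^ 2 + c ^ 2 + d ^ 2) : s + t < x :=
    lt_of_pow_lt_pow_left₀ 2 x.zero_le (by linarith [add_sq_le (a := s) (b := t)])
  convert (isRepr_four_of_add_lt (add_lt a b (by omega)))
    |>.add (isRepr_four_of_add_lt (add_lt a c (by omega)))
    |>.add (isRepr_four_of_add_lt (add_lt a d (by omega)))
    |>.add (isRepr_four_of_add_lt (add_lt b c (by omega)))
    |>.add (isRepr_four_of_add_lt (add_lt b d (by omega)))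
    |>.add (isRepr_four_of_add_lt (add_lt c d (by omega))) using 1
  ring

-- The parameter `n` and the seven additional bases `9 * l - x`, `x`, `x + l` (three times),
-- `x + 4 * l`, `2 * x - l` are such that all powers of `x` beyond the first cancel.
theorem isRepr_31_of_add_eq {l x : ℕ} (hl : 0 < l) (hlx : 3 * l ≤ x) (hxl : 5 * x ≤ 17 * l)
    (hm : m + 2460 * l ^ 4 * x = 60075 * l ^ 5) : IsRepr m 31 5 := by
  obtain ⟨n, hn⟩ : ∃ n, 22 * l ^ 2 = n + (3 * l * x + x ^ 2) :=
    Nat.exists_eq_add_of_le' (by nlinarith)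
  obtain ⟨y, hy⟩ := Nat.exists_eq_add_of_lt (show x < 9 * l by omega)
  obtain ⟨z, hz⟩ := Nat.exists_eq_add_of_lt (show l < 2 * x by omega)
  convert isRepr_liouville x n (by nlinarith)
    |>.add (isRepr_pow y.succ_pos) |>.add (isRepr_pow (show 0 < x by omega))
    |>.add (isRepr_pow (show 0 < x + l by omega)) |>.add (isRepr_pow (show 0 < x + l by omega))
    |>.add (isRepr_pow (show 0 < x + l by omega)) |>.add (isRepr_pow (show 0 < x + 4 * l by omega))
    |>.add (isRepr_pow z.succ_pos) using 1
  zify at hm hn hy hz ⊢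
  rw [show (y : ℤ) + 1 = 9 * l - x by linarith, show (z : ℤ) + 1 = 2 * x - l by linarith,
    show (n : ℤ) = 22 * l ^ 2 - (3 * l * x + x ^ 2) by linarith, eq_sub_of_add_eq hm]
  ring

theorem pow_le_pow_succ_of_pow_succ_le {y l : ℕ} (hl : 0 < l) (h : y ^ (k + 1) ≤ l ^ (k + 2)) :
    y ^ k ≤ l ^ (k + 1) := by
  refine (Nat.pow_le_pow_iff_left k.succ_ne_zero).1 ?_
  calc (y ^ k) ^ (k + 1) = (y ^ (k + 1)) ^ k := by ring
    _ ≤ (l ^ (k + 2)) ^ k := Nat.pow_le_pow_left h k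
    _ = l ^ (k * (k + 2)) := by ring
    _ ≤ l ^ ((k + 1) * (k + 1)) := Nat.pow_le_pow_right hl (by linarith)
    _ = (l ^ (k + 1)) ^ (k + 1) := pow_mul ..

theorem exists_pow_add_eq_of_le_pow {a l : ℕ} (hl : 0 < l) (ha : a < n) (hn : n ≤ l ^ (k + 2)) :
    ∃ y r, 0 < y ∧ y ^ (k + 1) + r = n ∧ a ≤ r ∧ r ≤ a + 2 ^ (k + 1) * l ^ (k + 1) := by
  obtain ⟨y, hy, hle, hlt⟩ := exists_add_pow_le_lt_add_add_one_pow (Nat.add_one_ne_zero k) ha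
  have hgap := add_one_pow_succ_add_pow_le hy k
  have hyl : 2 ^ (k + 1) * y ^ k ≤ 2 ^ (k + 1) * l ^ (k + 1) :=
    Nat.mul_le_mul_left _ (pow_le_pow_succ_of_pow_succ_le hl (by omega))
  exact ⟨y, n - y ^ (k + 1), hy, by omega, by omega, by omega⟩

theorem CoversResidues.isRepr_of_le_of_le {l : ℕ}
    (h : CoversResidues j 5 (2460 * l ^ 4) (17 * l ^ 5)) (hl : 0 < l)
    (hlo : 52001 * l ^ 5 ≤ n) (hhi : n ≤ l ^ 6) : IsRepr n (1 + (j + 31)) 5 := by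
  have hl5 : 0 < l ^ 5 := by positivity
  obtain ⟨y, r, hy, rfl, hr, hr'⟩ : ∃ y r, 0 < y ∧ y ^ 5 + r = n ∧ 52000 * l ^ 5 ≤ r ∧
      r ≤ 52000 * l ^ 5 + 2 ^ 5 * l ^ 5 :=
    exists_pow_add_eq_of_le_pow hl (show 52000 * l ^ 5 < n by omega) hhi
  obtain ⟨p, hp, hpl, t, ht⟩ := h (r - 60075 * l ^ 5)
  obtain ⟨m, rfl⟩ := Nat.exists_eq_add_of_le (show p ≤ r by omega)
  obtain ⟨x, rfl⟩ : ∃ x, t = -x := ⟨-t, (neg_neg t).symm⟩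
  have hx : (m : ℤ) + 2460 * l ^ 4 * x = 60075 * l ^ 5 := by push_cast at ht; linarith
  have hl4 : (0 : ℤ) < 2460 * l ^ 4 := by positivity
  zify at hl5 hpl hr hr'
  have hlx : 3 * (l : ℤ) ≤ x :=
    le_of_mul_le_mul_left (by linarith [Int.natCast_nonneg p]) hl4
  have hxl : 5 * x ≤ 17 * (l : ℤ) := le_of_mul_le_mul_left (by linarith) hl4
  lift x to ℕ using by linarith
  have hm : IsRepr m 31 5 :=
    isRepr_31_of_add_eq hl (by exact_mod_cast hlx) (by exact_mod_cast hxl) (by exact_mod_cast hx)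
  exact (isRepr_pow hy).add (hp.add hm)

theorem isRepr_52_of_le_log (h : 3600 ≤ Nat.log 2 n) : IsRepr n 52 5 := by
  have hlo : 2 ^ Nat.log 2 n ≤ n := Nat.pow_log_le_self 2 (by rintro rfl; simp at h)
  have hhi : n < 2 ^ (Nat.log 2 n + 1) := Nat.lt_pow_succ_log_self one_lt_two n
  generalize Nat.log 2 n = d at *
  obtain ⟨w, hw⟩ : ∃ w, w = d / 600 + 1 := ⟨_, rfl⟩
  refine (coversResidues_2460_mul_two_pow (w := w) (by omega)).isRepr_of_le_of_le (by positivity)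
    ?_ ?_
  · calc 52001 * (2 ^ (100 * w)) ^ 5 ≤ 2 ^ 16 * (2 ^ (100 * w)) ^ 5 := by gcongr; norm_num
      _ = 2 ^ (16 + 100 * w * 5) := by rw [← pow_mul, ← pow_add]
      _ ≤ 2 ^ d := Nat.pow_le_pow_right two_pos (by omega)
      _ ≤ n := hlo
  · calc n ≤ 2 ^ (d + 1) := hhi.le
      _ ≤ 2 ^ (100 * w * 6) := Nat.pow_le_pow_right two_pos (by omega)
      _ = (2 ^ (100 * w)) ^ 6 := pow_mul ..

theorem isRepr_add_57_of_le (hm : 150000 ≤ m) : IsRepr (m + 57) 57 5 := by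
  rcases lt_or_ge (Nat.log 2 m) 3600 with hlog | hlog
  · have hlt : m < 2 ^ (Nat.log 2 m + 1) := Nat.lt_pow_succ_log_self one_lt_two m
    have h54 : IsRepr (m + 54) 54 5 :=
      coversInterval_54 (e := Nat.log 2 m + 1) (by omega) m hm (by omega)
    exact h54.add_ones (by norm_num)
  · have h52 : IsRepr (m + 52) 52 5 :=
      isRepr_52_of_le_log (hlog.trans (Nat.log_mono_right (Nat.le_add_right m 52)))
    exact h52.add_ones (by norm_num)

end

/-- for every `j ≥ 57` and every positive integer `m`, `m + j` is the
sum of exactly `j` positive fifth powers iff `m + 57` is the sum of exactly `57`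
positive fifth powers. -/
theorem stmt_16 :
    ∀ j : ℕ, 57 ≤ j → ∀ m : ℕ, 0 < m →
      (IsRepr (m + j) j 5 ↔ IsRepr (m + 57) 57 5) := by
  intro j hj m _
  refine isRepr_add_iff_of_succ_imp (fun m h => ?_) hj
  rcases lt_or_ge m 150000 with hm | hm
  · exact isRepr_add_57_of_lt (by omega) h
  · exact isRepr_add_57_of_le hm
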